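/- arXiv:1812.03255 — 2 statements merged into one kernel-verified Lean document; each statement's English description precedes it below -/
import Mathlib

section
/- Let 𝕜 be a field of characteristic zero and n ≥ 1. Inside the polynomial ring P = 𝕜[x₁,…,xₙ], let U = U₁ + ⋯ + U_{n−1}, where Uᵢ = {f ∈ P : sᵢ(f) = f} is the subspace of polynomials invariant under swapping xᵢ and x_{i+1} (equivalently, the kernel of the i-th Demazure operator ∂ᵢ on P), and let W = { g · x₁^{n−1} x₂^{n−2} ⋯ x_{n−1} : g ∈ P symmetric } be the set of products of symmetric polynomials with the staircase monomial x^ρ, ρ = (n−1, n−2, …, 1, 0). Then P is the internal direct sum of the 𝕜-subspaces U and W: U ∩ W = 0 and U + W = P. -/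
open MvPolynomial

section Antisymmetrization

variable {σ R : Type*}

theorem X_sub_X_dvd_sub_rename_swap [CommRing R] [DecidableEq σ] (i j : σ)
    (f : MvPolynomial σ R) :
    (X i - X j : MvPolynomial σ R) ∣ f - rename (Equiv.swap i j) f := by
  set I : Ideal (MvPolynomial σ R) := Ideal.span {X i - X j}
  have hX : Ideal.Quotient.mkₐ R I (X i) = Ideal.Quotient.mkₐ R I (X j) :=
    Ideal.Quotient.eq.mpr (Ideal.mem_span_singleton_self _)
  have hrename : Ideal.Quotient.mkₐ R I =
      (Ideal.Quotient.mkₐ R I).comp (rename (Equiv.swap i j)) := by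
    ext k
    rw [AlgHom.comp_apply, rename_X]
    rcases eq_or_ne k i with rfl | hi
    · rw [Equiv.swap_apply_left, hX]
    rcases eq_or_ne k j with rfl | hj
    · rw [Equiv.swap_apply_right, hX]
    · rw [Equiv.swap_apply_of_ne_of_ne hi hj]
  exact Ideal.mem_span_singleton.mp (Ideal.Quotient.eq.mp (DFunLike.congr_fun hrename f))

theorem irreducible_X_sub_X [CommRing R] [IsDomain R] {i j : σ} (hij : i ≠ j) :
    Irreducible (X i - X j : MvPolynomial σ R) := by
  classical
  have h := irreducible_mul_X_add (R := R) (1 : MvPolynomial σ R) (-X j) i one_ne_zero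
    (by simp) (by simpa [support_neg, vars] using hij) isRelPrime_one_left
  simpa [sub_eq_add_neg] using h

theorem not_X_sub_X_dvd_X_sub_X [CommRing R] [Nontrivial R] {a b c d : σ} (hcd : c ≠ d)
    (h : ¬(c = a ∧ d = b)) (h' : ¬(c = b ∧ d = a)) :
    ¬(X a - X b : MvPolynomial σ R) ∣ X c - X d := by
  classical
  have eval_eq (v : σ → R) (hv : v a = v b) (hdvd : (X a - X b : MvPolynomial σ R) ∣ X c - X d) :
      v c = v d := by
    simpa [hv, sub_eq_zero] using map_dvd (eval v) hdvd
  intro hdvd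
  by_cases hc : c = a ∨ c = b
  · have hda : a ≠ d := by grind
    have hdb : b ≠ d := by grind
    have := eval_eq (Pi.single d 1) (by simp [hda, hdb]) hdvd
    simp [hcd] at this
  · push Not at hc
    have := eval_eq (Pi.single c 1) (by simp [hc.1.symm, hc.2.symm]) hdvd
    simp [hcd.symm] at this

/-- A polynomial is alternating if permuting its variables multiplies it by the sign. -/
def IsAlternatingPolynomial [CommRing R] [Fintype σ] [DecidableEq σ]
    (f : MvPolynomial σ R) : Prop :=
  ∀ τ : Equiv.Perm σ, rename τ f = (Equiv.Perm.sign τ : ℤ) • f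

/-- The signed sum of all permutations of a polynomial. -/
noncomputable def antisymmetrize [CommRing R] [Fintype σ] [DecidableEq σ] :
    MvPolynomial σ R →ₗ[R] MvPolynomial σ R :=
  ∑ τ : Equiv.Perm σ, (Equiv.Perm.sign τ : ℤ) • (rename τ).toLinearMap

theorem antisymmetrize_apply [CommRing R] [Fintype σ] [DecidableEq σ] (f : MvPolynomial σ R) :
    antisymmetrize f = ∑ τ : Equiv.Perm σ, (Equiv.Perm.sign τ : ℤ) • rename τ f := by
  simp [antisymmetrize]

theorem antisymmetrize_rename [CommRing R] [Fintype σ] [DecidableEq σ] (τ : Equiv.Perm σ)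
    (f : MvPolynomial σ R) :
    antisymmetrize (rename τ f) = (Equiv.Perm.sign τ : ℤ) • antisymmetrize f := by
  rw [antisymmetrize_apply, antisymmetrize_apply, Finset.smul_sum,
    ← Equiv.sum_comp (Equiv.mulRight τ)
      fun π ↦ (Equiv.Perm.sign τ : ℤ) • (Equiv.Perm.sign π : ℤ) • rename π f]
  refine Finset.sum_congr rfl fun π _ ↦ ?_
  rw [rename_rename, smul_smul]
  congr 1
  rcases Int.units_eq_one_or (Equiv.Perm.sign τ) with h | h <;> simp [h]

theorem isAlternatingPolynomial_antisymmetrize [CommRing R] [Fintype σ] [DecidableEq σ]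
    (f : MvPolynomial σ R) : IsAlternatingPolynomial (antisymmetrize f) := by
  intro τ
  rw [antisymmetrize_apply, map_sum, Finset.smul_sum,
    ← Equiv.sum_comp (Equiv.mulLeft τ)
      fun π ↦ (Equiv.Perm.sign τ : ℤ) • (Equiv.Perm.sign π : ℤ) • rename π f]
  refine Finset.sum_congr rfl fun π _ ↦ ?_
  rw [map_zsmul, rename_rename, smul_smul]
  congr 1
  rcases Int.units_eq_one_or (Equiv.Perm.sign τ) with h | h <;> simp [h]

theorem antisymmetrize_symmetric_mul [CommRing R] [Fintype σ] [DecidableEq σ]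
    {g : MvPolynomial σ R} (hg : g.IsSymmetric) (f : MvPolynomial σ R) :
    antisymmetrize (g * f) = g * antisymmetrize f := by
  simp only [antisymmetrize_apply, Finset.mul_sum, map_mul, hg _, mul_smul_comm]

variable {𝕜 : Type*} [Field 𝕜] [CharZero 𝕜]

theorem antisymmetrize_eq_zero_of_rename_swap_eq [Fintype σ] [DecidableEq σ] {i j : σ}
    (hij : i ≠ j) {f : MvPolynomial σ 𝕜} (hf : rename (Equiv.swap i j) f = f) :
    antisymmetrize f = 0 := by
  have h := antisymmetrize_rename (Equiv.swap i j) f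
  rw [hf, Equiv.Perm.sign_swap hij] at h
  exact self_eq_neg.mp (by simpa using h)

theorem IsAlternatingPolynomial.X_sub_X_dvd [Fintype σ] [DecidableEq σ]
    {f : MvPolynomial σ 𝕜} (hf : IsAlternatingPolynomial f) {i j : σ} (hij : i ≠ j) :
    (X i - X j : MvPolynomial σ 𝕜) ∣ f := by
  have h := X_sub_X_dvd_sub_rename_swap i j f
  rw [hf, Equiv.Perm.sign_swap hij] at h
  have h2 : f = C (2⁻¹ : 𝕜) * (f - ((-1 : ℤˣ) : ℤ) • f) := by
    rw [show f - ((-1 : ℤˣ) : ℤ) • f = C (2 : 𝕜) * f by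
      simp [map_ofNat (C : 𝕜 →+* MvPolynomial σ 𝕜) 2, two_mul], ← mul_assoc, ← C_mul]
    simp
  rw [h2]
  exact h.mul_left _

theorem IsAlternatingPolynomial.det_vandermonde_dvd {n : ℕ} {f : MvPolynomial (Fin n) 𝕜}
    (hf : IsAlternatingPolynomial f) :
    (Matrix.vandermonde (X : Fin n → MvPolynomial (Fin n) 𝕜)).det ∣ f := by
  rw [Matrix.det_vandermonde, Finset.prod_sigma']
  refine Finset.prod_dvd_of_isRelPrime ?_ ?_
  · rintro ⟨a, b⟩ hab ⟨c, d⟩ hcd hne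
    simp only [Finset.coe_sigma, Set.mem_sigma_iff, Finset.mem_coe, Finset.mem_Ioi,
      Finset.mem_univ, true_and] at hab hcd
    refine (irreducible_X_sub_X hab.ne').isRelPrime_iff_not_dvd.mpr
      (not_X_sub_X_dvd_X_sub_X hcd.ne' ?_ ?_)
    · rintro ⟨rfl, rfl⟩
      exact hne rfl
    · rintro ⟨rfl, rfl⟩
      exact absurd hab hcd.not_gt
  · rintro ⟨a, b⟩ hab
    simp only [Finset.mem_sigma, Finset.mem_Ioi, Finset.mem_univ, true_and] at hab
    exact hf.X_sub_X_dvd hab.ne'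

theorem antisymmetrize_staircase [CommRing R] (n : ℕ) :
    antisymmetrize (∏ i : Fin n, (X i : MvPolynomial (Fin n) R) ^ (n - 1 - (i : ℕ))) =
      (Equiv.Perm.sign (Fin.revPerm : Equiv.Perm (Fin n)) : ℤ) •
        (Matrix.vandermonde (X : Fin n → MvPolynomial (Fin n) R)).det := by
  have h := Matrix.det_permute' Fin.revPerm
    (Matrix.vandermonde (X : Fin n → MvPolynomial (Fin n) R))
  rw [zsmul_eq_mul, ← h, Matrix.det_apply, antisymmetrize_apply]
  refine Finset.sum_congr rfl fun τ _ ↦ ?_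
  rw [Units.smul_def]
  congr 1
  rw [map_prod]
  refine Finset.prod_congr rfl fun i _ ↦ ?_
  rw [map_pow, rename_X, Matrix.submatrix_apply, Matrix.vandermonde_apply, id,
    Fin.revPerm_apply, Fin.val_rev]
  congr 1
  omega

theorem antisymmetrize_staircase_ne_zero (n : ℕ) :
    antisymmetrize (∏ i : Fin n, (X i : MvPolynomial (Fin n) 𝕜) ^ (n - 1 - (i : ℕ))) ≠ 0 := by
  rw [antisymmetrize_staircase]
  refine smul_ne_zero (by simp) (Matrix.det_vandermonde_ne_zero_iff.mpr X_injective)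

theorem IsAlternatingPolynomial.antisymmetrize_staircase_dvd {n : ℕ}
    {f : MvPolynomial (Fin n) 𝕜} (hf : IsAlternatingPolynomial f) :
    antisymmetrize (∏ i : Fin n, (X i : MvPolynomial (Fin n) 𝕜) ^ (n - 1 - (i : ℕ))) ∣ f := by
  rw [antisymmetrize_staircase]
  rcases Int.units_eq_one_or (Equiv.Perm.sign (Fin.revPerm : Equiv.Perm (Fin n))) with h | h <;>
    simpa [h] using hf.det_vandermonde_dvd

theorem IsAlternatingPolynomial.isSymmetric_of_mul [CommRing R] [IsDomain R] [Fintype σ]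
    [DecidableEq σ] {d g : MvPolynomial σ R} (hd : IsAlternatingPolynomial d) (hd0 : d ≠ 0)
    (hdg : IsAlternatingPolynomial (d * g)) : g.IsSymmetric := by
  intro τ
  have h := hdg τ
  rw [map_mul, hd τ, smul_mul_assoc] at h
  refine mul_left_cancel₀ hd0 ?_
  rcases Int.units_eq_one_or (Equiv.Perm.sign τ) with hτ | hτ <;> simpa [hτ] using h

/-- A submodule containing the fixed polynomials of all adjacent transpositions contains every
`f - sign τ • τ f`. -/
theorem sub_sign_smul_rename_mem [CommRing R] {n : ℕ} {U : Submodule R (MvPolynomial (Fin n) R)}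
    (hU : ∀ (i : ℕ) (hi : i + 1 < n) (f : MvPolynomial (Fin n) R),
      rename (Equiv.swap (⟨i, Nat.lt_of_succ_lt hi⟩ : Fin n) ⟨i + 1, hi⟩) f = f → f ∈ U)
    (τ : Equiv.Perm (Fin n)) (f : MvPolynomial (Fin n) R) :
    f - (Equiv.Perm.sign τ : ℤ) • rename τ f ∈ U := by
  obtain _ | n := n
  · simp [Subsingleton.elim τ 1]
  have hτ : τ ∈ Submonoid.closure (Set.range fun i : Fin n ↦ Equiv.swap i.castSucc i.succ) := by
    rw [Equiv.Perm.mclosure_swap_castSucc_succ]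
    trivial
  induction hτ using Submonoid.closure_induction_left generalizing f with
  | one => simp
  | mul_left s hs τ _ ih =>
    obtain ⟨i, rfl⟩ := hs
    have hfix : rename τ f + rename (Equiv.swap i.castSucc i.succ) (rename τ f) ∈ U := by
      refine hU i (by omega) _ ?_
      change rename (Equiv.swap i.castSucc i.succ) _ = _
      simp only [map_add, rename_rename, ← Equiv.Perm.coe_mul, Equiv.swap_mul_self_mul]
      exact add_comm _ _
    rw [rename_rename, ← Equiv.Perm.coe_mul] at hfix
    have h := U.add_mem (ih f) (zsmul_mem hfix (Equiv.Perm.sign τ : ℤ))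
    convert h using 1
    rw [Equiv.Perm.sign_mul, Equiv.Perm.sign_swap i.castSucc_lt_succ.ne]
    simp only [smul_add, neg_mul, one_mul, Units.val_neg, neg_smul]
    abel

theorem mem_of_antisymmetrize_eq_zero {n : ℕ} {U : Submodule 𝕜 (MvPolynomial (Fin n) 𝕜)}
    (hU : ∀ (i : ℕ) (hi : i + 1 < n) (f : MvPolynomial (Fin n) 𝕜),
      rename (Equiv.swap (⟨i, Nat.lt_of_succ_lt hi⟩ : Fin n) ⟨i + 1, hi⟩) f = f → f ∈ U)
    {f : MvPolynomial (Fin n) 𝕜} (hf : antisymmetrize f = 0) : f ∈ U := by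
  have h := U.sum_mem fun (τ : Equiv.Perm (Fin n)) (_ : τ ∈ Finset.univ) ↦
    sub_sign_smul_rename_mem hU τ f
  rw [Finset.sum_sub_distrib, ← antisymmetrize_apply, hf, sub_zero, Finset.sum_const,
    ← Nat.cast_smul_eq_nsmul 𝕜] at h
  exact (U.smul_mem_iff (by simp [Fintype.card_ne_zero])).mp h

end Antisymmetrization

/-- Let `𝕜` be a field of characteristic zero and `n ≥ 1`.  Inside
the polynomial ring `P = 𝕜[x₁,…,xₙ]`, let `U = U₁ + ⋯ + U_{n−1}` where
`Uᵢ = {f : sᵢ f = f}` is the fixed subspace of the transposition of `xᵢ` and `xᵢ₊₁`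
(equivalently, the kernel of the `i`-th Demazure operator), and let
`W = {g · x^ρ : g symmetric}` with `x^ρ = x₁^{n−1} x₂^{n−2} ⋯ x_{n−1}` the staircase
monomial.  Then `P` is the internal direct sum of the `𝕜`-subspaces `U` and `W`:
`U ∩ W = 0` and `U + W = P`.  (Everything is `0`-indexed below.) -/
theorem polynomialRing_direct_sum_nonsymmetric_staircase
    (𝕜 : Type*) [Field 𝕜] [CharZero 𝕜] (n : ℕ) (hn : 1 ≤ n)
    (U W : Submodule 𝕜 (MvPolynomial (Fin n) 𝕜))
    (hU : U = ⨆ (i : ℕ) (hi : i + 1 < n),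
      LinearMap.ker
        ((MvPolynomial.rename
            (⇑(Equiv.swap (⟨i, Nat.lt_of_succ_lt hi⟩ : Fin n) ⟨i + 1, hi⟩))).toLinearMap -
          (LinearMap.id : MvPolynomial (Fin n) 𝕜 →ₗ[𝕜] MvPolynomial (Fin n) 𝕜)))
    (hW : W = Submodule.map
        (LinearMap.mulRight 𝕜
          (∏ i : Fin n, (X i : MvPolynomial (Fin n) 𝕜) ^ (n - 1 - (i : ℕ))))
        (Subalgebra.toSubmodule (MvPolynomial.symmetricSubalgebra (Fin n) 𝕜))) :
    U ⊓ W = ⊥ ∧ U ⊔ W = ⊤ := by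
  have hmem (i : ℕ) (hi : i + 1 < n) (f : MvPolynomial (Fin n) 𝕜)
      (hf : rename (Equiv.swap (⟨i, Nat.lt_of_succ_lt hi⟩ : Fin n) ⟨i + 1, hi⟩) f = f) :
      f ∈ U := by
    rw [hU]
    exact Submodule.mem_iSup_of_mem i (Submodule.mem_iSup_of_mem hi (by simp [hf]))
  have hker : U ≤ LinearMap.ker antisymmetrize := by
    rw [hU]
    refine iSup₂_le fun i hi f hf ↦ ?_
    exact antisymmetrize_eq_zero_of_rename_swap_eq (by simp)
      (sub_eq_zero.mp (LinearMap.mem_ker.mp hf))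
  subst hW
  constructor
  · rw [eq_bot_iff]
    rintro _ ⟨hf, g, hg, rfl⟩
    have hzero := LinearMap.mem_ker.mp (hker hf)
    rw [LinearMap.mulRight_apply, antisymmetrize_symmetric_mul hg] at hzero
    have hg0 := (mul_eq_zero.mp hzero).resolve_right (antisymmetrize_staircase_ne_zero n)
    simp [hg0]
  · rw [eq_top_iff]
    intro f _
    have halt := isAlternatingPolynomial_antisymmetrize f
    obtain ⟨g, hg⟩ := halt.antisymmetrize_staircase_dvd
    have hsymm : g.IsSymmetric :=
      (isAlternatingPolynomial_antisymmetrize _).isSymmetric_of_mul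
        (antisymmetrize_staircase_ne_zero n) (hg ▸ halt)
    rw [← sub_add_cancel f (g * ∏ i : Fin n, X i ^ (n - 1 - (i : ℕ)))]
    refine Submodule.add_mem_sup (mem_of_antisymmetrize_eq_zero hmem ?_) ⟨g, hsymm, rfl⟩
    rw [map_sub, antisymmetrize_symmetric_mul hsymm, hg, mul_comm, sub_self]
end

section
/- Let 𝕜 be an algebraically closed field, V a finite-dimensional 𝕜-vector space, and f, g commuting 𝕜-linear endomorphisms of V (f∘g = g∘f). If no eigenvalue of f is also an eigenvalue of g (i.e. the sets of eigenvalues of f and of g are disjoint), then f − g is an invertible endomorphism of V. -/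
/-- Let `𝕜` be an algebraically closed field, `V` a finite-dimensional
`𝕜`-vector space, and `f, g` commuting endomorphisms of `V`.  If no eigenvalue of `f`
is also an eigenvalue of `g`, then `f − g` is an invertible endomorphism of `V`. -/
theorem sub_isUnit_of_commute_of_disjoint_eigenvalues
    (𝕜 : Type*) [Field 𝕜] [IsAlgClosed 𝕜]
    (V : Type*) [AddCommGroup V] [Module 𝕜 V] [FiniteDimensional 𝕜 V]
    (f g : Module.End 𝕜 V) (hfg : f * g = g * f)
    (h : ∀ c : 𝕜, ¬(Module.End.HasEigenvalue f c ∧ Module.End.HasEigenvalue g c)) :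
    IsUnit (f - g) := by
  rw [LinearMap.isUnit_iff_ker_eq_bot]
  by_contra hker
  have : Nontrivial (LinearMap.ker (f - g)) := Submodule.nontrivial_iff_ne_bot.mpr hker
  have hmaps : ∀ x ∈ LinearMap.ker (f - g), f x ∈ LinearMap.ker (f - g) := by
    intro x hx
    have hfx : f x = g x := by simpa [sub_eq_zero] using hx
    have hcomm : f (g x) = g (f x) := LinearMap.congr_fun hfg x
    rw [LinearMap.mem_ker, LinearMap.sub_apply, sub_eq_zero, ← hcomm, hfx]
  obtain ⟨c, hc⟩ := Module.End.exists_eigenvalue (f.restrict hmaps)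
  obtain ⟨⟨v, hv⟩, hvc⟩ := hc.exists_hasEigenvector
  have hfv : f v = c • v := congrArg Subtype.val hvc.apply_eq_smul
  have hgv : g v = c • v := by
    rw [← hfv, eq_comm]
    simpa [sub_eq_zero] using hv
  have hv0 : v ≠ 0 := fun h0 => hvc.2 (Subtype.ext h0)
  exact h c
    ⟨Module.End.hasEigenvalue_of_hasEigenvector
        (Module.End.hasEigenvector_iff.mpr ⟨Module.End.mem_eigenspace_iff.mpr hfv, hv0⟩),
      Module.End.hasEigenvalue_of_hasEigenvector
        (Module.End.hasEigenvector_iff.mpr ⟨Module.End.mem_eigenspace_iff.mpr hgv, hv0⟩)⟩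
end
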